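/- Let p ∈ ℂ with 0 < |p| < 1, let Λ ∈ ℂ∖{0} with Λ ∉ p^{2ℤ}, and let x ∈ ℂ∖{0} with x ∉ p^{4ℤ}. Then, with θ taken at base p⁴, the following identity holds: 1 = [ θ(p³Λ^{−1};p⁴)θ(p^{−3}Λ;p⁴)/(2 θ(p^{−4}Λ;p⁴)θ(p^{−6}Λ;p⁴)) + θ(pΛ^{−1};p⁴)θ(p^{−1}Λ;p⁴)/(2 θ(p^{−2}Λ;p⁴)θ(p^{−4}Λ;p⁴)) ] · θ(p^{−1}x;p⁴)θ(p^{−3}x;p⁴)/(θ(x;p⁴)θ(x^{−1};p⁴)) + [ θ(−p³Λ^{−1};p⁴)θ(−p^{−3}Λ;p⁴)/(2 θ(p^{−4}Λ;p⁴)θ(p^{−6}Λ;p⁴)) + θ(−pΛ^{−1};p⁴)θ(−p^{−1}Λ;p⁴)/(2 θ(p^{−2}Λ;p⁴)θ(p^{−4}Λ;p⁴)) ] · θ(−p^{−1}x;p⁴)θ(−p^{−3}x;p⁴)/(θ(x;p⁴)θ(x^{−1};p⁴)). (This is the identity, with q = p⁴ and λ₁ = Λ, expressing that the residues of the elliptic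 function m_{2,1} of the 4₁ knot monodromy sum to zero.) -/

import Mathlib

/-- The Jacobi theta function `θ(u;Q) = Σ_{k∈ℤ} (−1)^k Q^{k(k+1)/2} u^k`. -/
noncomputable def jtheta (u Q : ℂ) : ℂ :=
  ∑' k : ℤ, (-1 : ℂ) ^ k * Q ^ (k * (k + 1) / 2) * u ^ k

open Filter Topology

lemma hasSum_of_eq {ι : Type*} {f g : ι → ℂ} {a : ℂ} (h : HasSum g a) (e : ∀ k, f k = g k) :
    HasSum f a := by
  rwa [funext e]

lemma tri_two (k : ℤ) : 2 * (k * (k + 1) / 2) = k * (k + 1) :=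
  Int.mul_ediv_cancel' (Int.even_mul_succ_self k).two_dvd

lemma tri_succ (k : ℤ) : (k + 1) * (k + 1 + 1) / 2 = k * (k + 1) / 2 + (k + 1) := by
  have h1 := tri_two k
  have h2 := tri_two (k + 1)
  linarith

lemma tri_pred (k : ℤ) : (k - 1) * (k - 1 + 1) / 2 = k * (k + 1) / 2 - k := by
  have h1 := tri_two k
  have h2 := tri_two (k - 1)
  linarith

/-- Summability over the naturals. -/
lemma summable_nat_aux {Q u : ℂ} (hQ0 : Q ≠ 0) (hQ1 : ‖Q‖ < 1) (hu : u ≠ 0) :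
    Summable fun n : ℕ => Q ^ ((n : ℤ) * (n + 1) / 2) * u ^ (n : ℤ) := by
  apply summable_of_ratio_test_tendsto_lt_one (l := 0) zero_lt_one
  · exact Eventually.of_forall fun n => mul_ne_zero (zpow_ne_zero _ hQ0) (zpow_ne_zero _ hu)
  · have h : ∀ n : ℕ, ‖Q ^ (((n + 1 : ℕ) : ℤ) * ((n + 1 : ℕ) + 1) / 2) * u ^ ((n + 1 : ℕ) : ℤ)‖ /
        ‖Q ^ ((n : ℤ) * (n + 1) / 2) * u ^ (n : ℤ)‖ = ‖Q‖ ^ n * (‖Q‖ * ‖u‖) := by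
      intro n
      push_cast
      rw [tri_succ, zpow_add₀ hQ0, zpow_add₀ hu, zpow_add₀ hQ0]
      rw [← norm_div]
      have h1 : Q ^ ((n : ℤ) * (n + 1) / 2) ≠ 0 := zpow_ne_zero _ hQ0
      have h2 : u ^ (n : ℤ) ≠ 0 := zpow_ne_zero _ hu
      rw [← norm_pow, ← norm_mul, ← norm_mul]
      congr 1
      rw [div_eq_iff (mul_ne_zero h1 h2)]
      simp only [zpow_natCast, zpow_one]
      ring
    simp_rw [h]
    simpa using (tendsto_pow_atTop_nhds_zero_of_lt_one (norm_nonneg Q) hQ1).mul_const (‖Q‖ * ‖u‖)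

lemma summable_int_aux {Q u : ℂ} (hQ0 : Q ≠ 0) (hQ1 : ‖Q‖ < 1) (hu : u ≠ 0) :
    Summable fun k : ℤ => Q ^ (k * (k + 1) / 2) * u ^ k := by
  refine Summable.of_nat_of_neg_add_one (f := fun k : ℤ => Q ^ (k * (k + 1) / 2) * u ^ k)
    (summable_nat_aux hQ0 hQ1 hu) ?_
  have := (summable_nat_aux hQ0 hQ1 (inv_ne_zero hu)).mul_right u⁻¹
  refine this.congr fun n => ?_
  have e : (-((n : ℤ) + 1)) * (-((n : ℤ) + 1) + 1) / 2 = (n : ℤ) * (n + 1) / 2 := by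
    congr 1; ring
  rw [e, zpow_neg, ← inv_zpow, zpow_add₀ (inv_ne_zero hu), zpow_one]
  ring

lemma summable_jtheta {Q u : ℂ} (hQ0 : Q ≠ 0) (hQ1 : ‖Q‖ < 1) (hu : u ≠ 0) :
    Summable fun k : ℤ => (-1 : ℂ) ^ k * Q ^ (k * (k + 1) / 2) * u ^ k := by
  refine (summable_int_aux hQ0 hQ1 (neg_ne_zero.mpr hu)).congr fun k => ?_
  rw [neg_eq_neg_one_mul u, mul_zpow]; ring

/-- Even theta series. -/
noncomputable def evF (Q z : ℂ) : ℂ := ∑' k : ℤ, Q ^ (k * (k + 1)) * z ^ k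

/-- Companion theta series. -/
noncomputable def evG (Q z : ℂ) : ℂ := ∑' k : ℤ, Q ^ (k * k) * z ^ k

lemma summable_evF {Q z : ℂ} (hQ0 : Q ≠ 0) (hQ1 : ‖Q‖ < 1) (hz : z ≠ 0) :
    Summable fun k : ℤ => Q ^ (k * (k + 1)) * z ^ k := by
  have h : ‖Q ^ (2 : ℤ)‖ < 1 := by
    rw [norm_zpow]; exact_mod_cast pow_lt_one₀ (norm_nonneg Q) hQ1 two_ne_zero
  refine (summable_int_aux (zpow_ne_zero 2 hQ0) h hz).congr fun k => ?_
  rw [← zpow_mul, tri_two]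

lemma summable_evG {Q z : ℂ} (hQ0 : Q ≠ 0) (hQ1 : ‖Q‖ < 1) (hz : z ≠ 0) :
    Summable fun k : ℤ => Q ^ (k * k) * z ^ k := by
  refine (summable_evF hQ0 hQ1 (div_ne_zero hz hQ0)).congr fun k => ?_
  have : Q ^ k ≠ 0 := zpow_ne_zero _ hQ0
  rw [mul_add, zpow_add₀ hQ0, div_zpow, mul_one]
  field_simp

lemma evF_div {Q z : ℂ} (hQ0 : Q ≠ 0) : evF Q (z / Q) = evG Q z := by
  unfold evF evG
  refine tsum_congr fun k => ?_
  have : Q ^ k ≠ 0 := zpow_ne_zero _ hQ0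
  rw [mul_add, zpow_add₀ hQ0, div_zpow, mul_one]
  field_simp

lemma evG_div {Q z : ℂ} (hQ0 : Q ≠ 0) (hz : z ≠ 0) : evG Q (z / Q) = z * evF Q z := by
  unfold evF evG
  rw [← tsum_mul_left, ← (Equiv.addRight (1 : ℤ)).tsum_eq]
  refine tsum_congr fun k => ?_
  simp only [Equiv.coe_addRight]
  rw [show (k + 1) * (k + 1) = k * (k + 1) + (k + 1) by ring, zpow_add₀ hQ0, div_zpow,
    zpow_add₀ hz, zpow_one]
  have : Q ^ (k + 1) ≠ 0 := zpow_ne_zero _ hQ0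
  field_simp

lemma evF_sq {p : ℂ} (hp : p ≠ 0) : p ^ 2 * evF (p ^ 4) (p ^ 2) = evG (p ^ 4) (p ^ 2) := by
  unfold evF evG
  rw [← tsum_mul_left, ← (Equiv.subLeft (-1 : ℤ)).tsum_eq]
  refine tsum_congr fun k => ?_
  simp only [Equiv.subLeft_apply]
  simp only [← zpow_natCast, ← zpow_mul, ← zpow_add₀ hp]
  congr 1
  push_cast
  ring

lemma jtheta_inv {Q u : ℂ} (_hQ0 : Q ≠ 0) (hu : u ≠ 0) : jtheta u⁻¹ Q = -u * jtheta u Q := by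
  unfold jtheta
  rw [← tsum_mul_left, ← (Equiv.subLeft (-1 : ℤ)).tsum_eq]
  refine tsum_congr fun k => ?_
  simp only [Equiv.subLeft_apply]
  rw [show (-1 - k) * (-1 - k + 1) = k * (k + 1) by ring, inv_zpow, ← zpow_neg,
    show -(-1 - k) = k + 1 by ring, zpow_add₀ hu, zpow_sub₀ (by norm_num), zpow_one]
  have : (-1 : ℂ) ^ (-1 : ℤ) / (-1) ^ k = - (-1) ^ k := by
    rcases Int.even_or_odd k with h | h
    · simp [h.neg_one_zpow]
    · simp [h.neg_one_zpow]
  rw [this]; ring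

lemma jtheta_div {Q u : ℂ} (hQ0 : Q ≠ 0) (hu : u ≠ 0) : jtheta (u / Q) Q = -u * jtheta u Q := by
  unfold jtheta
  rw [← tsum_mul_left, ← (Equiv.addRight (1 : ℤ)).tsum_eq]
  refine tsum_congr fun k => ?_
  simp only [Equiv.coe_addRight]
  rw [tri_succ, zpow_add₀ hQ0, div_zpow, zpow_add₀ hu, zpow_one, zpow_add₀ (by norm_num : (-1:ℂ) ≠ 0)]
  have : Q ^ (k + 1) ≠ 0 := zpow_ne_zero _ hQ0
  field_simp

/-- Splitting pairs of integers by parity of the sum. -/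
def pairEquiv : (ℤ × ℤ) ⊕ (ℤ × ℤ) ≃ ℤ × ℤ where
  toFun s := match s with
    | Sum.inl (a, b) => (a + b, a - b)
    | Sum.inr (a, b) => (a + b + 1, a - b)
  invFun s := if (s.1 + s.2) % 2 = 0 then Sum.inl ((s.1 + s.2) / 2, (s.1 - s.2) / 2)
    else Sum.inr ((s.1 + s.2) / 2, (s.1 - s.2) / 2)
  left_inv s := by
    rcases s with ⟨a, b⟩ | ⟨a, b⟩
    · have : (a + b + (a - b)) % 2 = 0 := by omega
      simp only [this, if_true, Sum.inl.injEq, Prod.mk.injEq]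
      omega
    · have : ¬ (a + b + 1 + (a - b)) % 2 = 0 := by omega
      simp only [this, if_false, Sum.inr.injEq, Prod.mk.injEq]
      omega
  right_inv s := by
    rcases s with ⟨a, b⟩
    dsimp only
    split_ifs with h <;> simp only [Prod.mk.injEq] <;> omega

lemma jtheta_mul {Q u v : ℂ} (hQ0 : Q ≠ 0) (hQ1 : ‖Q‖ < 1) (hu : u ≠ 0) (hv : v ≠ 0) :
    jtheta u Q * jtheta v Q =
      evF Q (u * v) * evG Q (u / v) - v⁻¹ * (evG Q (u * v) * evF Q (u / v)) := by
  have h1 := (summable_jtheta hQ0 hQ1 hu).norm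
  have h2 := (summable_jtheta hQ0 hQ1 hv).norm
  have hm : u * v ≠ 0 := mul_ne_zero hu hv
  have hd : u / v ≠ 0 := div_ne_zero hu hv
  have e1 := tsum_mul_tsum_of_summable_norm (summable_evF hQ0 hQ1 hm).norm
    (summable_evG hQ0 hQ1 hd).norm
  have e2 := tsum_mul_tsum_of_summable_norm (summable_evG hQ0 hQ1 hm).norm
    (summable_evF hQ0 hQ1 hd).norm
  have s1 := (summable_mul_of_summable_norm (summable_evF hQ0 hQ1 hm).norm
    (summable_evG hQ0 hQ1 hd).norm).hasSum
  have s2 := (summable_mul_of_summable_norm (summable_evG hQ0 hQ1 hm).norm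
    (summable_evF hQ0 hQ1 hd).norm).hasSum
  rw [← e1] at s1
  rw [← e2] at s2
  unfold jtheta
  rw [tsum_mul_tsum_of_summable_norm h1 h2, ← pairEquiv.tsum_eq]
  rw [sub_eq_add_neg]
  refine (HasSum.sum ?_ ?_).tsum_eq
  · unfold evF evG
    convert s1 using 1
    funext ⟨a, b⟩
    simp only [Function.comp, pairEquiv, Equiv.coe_fn_mk]
    have t : (a + b) * (a + b + 1) / 2 + (a - b) * (a - b + 1) / 2 = a * (a + 1) + b * b := by
      have h1 := tri_two (a + b)
      have h2 := tri_two (a - b)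
      linarith
    have hs : (-1 : ℂ) ^ (a + b) * (-1) ^ (a - b) = 1 := by
      rw [← zpow_add₀ (by norm_num)]
      exact Even.neg_one_zpow ⟨a, by ring⟩
    calc _ = ((-1 : ℂ) ^ (a + b) * (-1) ^ (a - b)) *
          (Q ^ ((a + b) * (a + b + 1) / 2) * Q ^ ((a - b) * (a - b + 1) / 2)) *
          (u ^ (a + b) * v ^ (a - b)) := by ring
      _ = _ := by
        rw [hs, ← zpow_add₀ hQ0, t, zpow_add₀ hQ0, zpow_add₀ hu, zpow_sub₀ hv, mul_zpow, div_zpow]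
        ring
  · unfold evF evG
    have s3 := ((Equiv.addRight (1 : ℤ)).prodCongr (Equiv.refl ℤ)).hasSum_iff.mpr (s2.mul_left (-v⁻¹))
    rw [neg_mul] at s3
    refine hasSum_of_eq s3 ?_
    · rintro ⟨a, b⟩
      simp only [Function.comp, pairEquiv, Equiv.coe_fn_mk, Equiv.prodCongr_apply, Prod.map,
        Equiv.coe_addRight, Equiv.refl_apply]
      have t : (a + b + 1) * (a + b + 1 + 1) / 2 + (a - b) * (a - b + 1) / 2
          = (a + 1) * (a + 1) + b * (b + 1) := by
        have h1 := tri_two (a + b + 1)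
        have h2 := tri_two (a - b)
        linarith
      have hs : (-1 : ℂ) ^ (a + b + 1) * (-1) ^ (a - b) = -1 := by
        rw [← zpow_add₀ (by norm_num)]
        exact Odd.neg_one_zpow ⟨a, by ring⟩
      calc _ = ((-1 : ℂ) ^ (a + b + 1) * (-1) ^ (a - b)) *
            (Q ^ ((a + b + 1) * (a + b + 1 + 1) / 2) * Q ^ ((a - b) * (a - b + 1) / 2)) *
            (u ^ (a + b + 1) * v ^ (a - b)) := by ring
        _ = _ := by
          rw [hs, ← zpow_add₀ hQ0, t, zpow_add₀ hQ0, zpow_add₀ hu, zpow_add₀ hu, zpow_sub₀ hv,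
            mul_zpow, div_zpow, zpow_add₀ hu, zpow_add₀ hv, zpow_one, zpow_one]
          field_simp

/-- Finite q-Pochhammer symbol. -/
noncomputable def qp (Q : ℂ) (n : ℕ) : ℂ := ∏ i ∈ Finset.range n, (1 - Q ^ (i + 1))

/-- Reciprocal q-Pochhammer symbol, extended by zero. -/
noncomputable def rp (Q : ℂ) (n : ℤ) : ℂ := if 0 ≤ n then (qp Q n.toNat)⁻¹ else 0

lemma one_sub_pow_ne {Q : ℂ} (hQ1 : ‖Q‖ < 1) (n : ℕ) : 1 - Q ^ (n + 1) ≠ 0 := by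
  intro h
  have : ‖Q ^ (n + 1)‖ = 1 := by rw [← sub_eq_zero.mp h]; simp
  rw [norm_pow] at this
  exact absurd this (pow_lt_one₀ (norm_nonneg Q) hQ1 (by omega)).ne

lemma qp_succ (Q : ℂ) (n : ℕ) : qp Q (n + 1) = qp Q n * (1 - Q ^ (n + 1)) := by
  simp [qp, Finset.prod_range_succ]

lemma rp_pred {Q : ℂ} (hQ1 : ‖Q‖ < 1) (n : ℤ) : rp Q (n - 1) = (1 - Q ^ n) * rp Q n := by
  rcases lt_trichotomy n 0 with h | h | h
  · simp [rp, show ¬ (0 ≤ n) by omega, show ¬ (1 ≤ n) by omega]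
  · subst h; simp [rp]
  · obtain ⟨m, rfl⟩ : ∃ m : ℕ, n = m + 1 := ⟨(n - 1).toNat, by omega⟩
    have h1 : ((m : ℤ) + 1).toNat = m + 1 := by omega
    have h2 : (0 : ℤ) ≤ m + 1 := by omega
    have h3 := one_sub_pow_ne hQ1 m
    have h4 : Q ^ ((m : ℤ) + 1) = Q ^ (m + 1) := by exact_mod_cast zpow_natCast Q (m + 1)
    simp only [rp, add_sub_cancel_right, Int.natCast_nonneg, if_true, h2, Int.toNat_natCast, h1,
      qp_succ, h4]
    field_simp

/-- Finite Jacobi triple product. -/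
lemma finite_triple {Q u : ℂ} (hQ0 : Q ≠ 0) (hQ1 : ‖Q‖ < 1) (hu : u ≠ 0) (N : ℕ) :
    HasSum (fun k : ℤ => (-1 : ℂ) ^ k * Q ^ (k * (k + 1) / 2) * u ^ k *
        (qp Q (2 * N) * rp Q (N + k) * rp Q (N - k)))
      (∏ i ∈ Finset.range N, ((1 - Q ^ (i + 1) * u) * (1 - Q ^ i * u⁻¹))) := by
  induction N with
  | zero =>
    convert hasSum_single (0 : ℤ) ?_ using 1
    · simp [qp, rp]
    · intro k hk
      have : rp Q ((0 : ℕ) + k) * rp Q ((0 : ℕ) - k) = 0 := by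
        rcases lt_or_gt_of_ne hk with h | h
        · simp [rp, h]
        · simp [rp, h]
      rw [mul_assoc (qp _ _), this]; simp
  | succ N ih =>
    rw [Finset.prod_range_succ]
    have h1 := ih.mul_right (1 + Q ^ (2 * N + 1))
    have h2 := ((Equiv.subRight (1 : ℤ)).hasSum_iff.mpr ih).mul_right (Q ^ (N + 1) * u)
    have h3 := ((Equiv.addRight (1 : ℤ)).hasSum_iff.mpr ih).mul_right (Q ^ N * u⁻¹)
    have h4 := (h1.sub h2).sub h3
    rw [← mul_sub, ← mul_sub] at h4
    rw [show (1 - Q ^ (N + 1) * u) * (1 - Q ^ N * u⁻¹) =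
      1 + Q ^ (2 * N + 1) - Q ^ (N + 1) * u - Q ^ N * u⁻¹ from ?_]
    · refine hasSum_of_eq h4 fun k => ?_
      simp only [Function.comp, Equiv.subRight_apply, Equiv.coe_addRight]
      rw [tri_succ, tri_pred, zpow_sub₀ hQ0, zpow_add₀ hQ0 _ (k + 1), zpow_sub₀ hu,
        zpow_add₀ hu, zpow_sub₀ (by norm_num : (-1 : ℂ) ≠ 0),
        zpow_add₀ (by norm_num : (-1 : ℂ) ≠ 0)]
      have hk : Q ^ k ≠ 0 := zpow_ne_zero _ hQ0
      have a1 := rp_pred hQ1 ((N : ℤ) + 1 + k)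
      have a2 := rp_pred hQ1 ((N : ℤ) + k)
      have b1 := rp_pred hQ1 ((N : ℤ) + 1 - k)
      have b2 := rp_pred hQ1 ((N : ℤ) - k)
      rw [show (N : ℤ) + 1 + k - 1 = N + k by ring] at a1
      rw [show (N : ℤ) + 1 - k - 1 = N - k by ring] at b1
      rw [show (N : ℤ) + (k - 1) = N + k - 1 by ring, show (N : ℤ) - (k - 1) = N + 1 - k by ring,
        show (N : ℤ) + (k + 1) = N + 1 + k by ring, show (N : ℤ) - (k + 1) = N - k - 1 by ring,
        a2, b2, a1, b1]
      push_cast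
      rw [show 2 * (N + 1) = 2 * N + 1 + 1 by ring, qp_succ, qp_succ]
      simp only [zpow_add₀ hQ0, zpow_sub₀ hQ0, zpow_natCast, zpow_one]
      generalize rp Q (N + 1 + k) = a
      generalize rp Q (N + 1 - k) = b
      generalize Q ^ (k * (k + 1) / 2) = T
      generalize Q ^ k = K at *
      generalize (-1 : ℂ) ^ k = s
      field_simp
      ring
    · have : Q ^ (2 * N + 1) = Q ^ (N + 1) * Q ^ N := by ring
      rw [this]
      field_simp
      ring

lemma tendsto_prod_aux {f : ℕ → ℂ} (hf : ∀ i, 1 - f i ≠ 0) (hs : Summable f) :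
    ∃ L : ℂ, L ≠ 0 ∧ Tendsto (fun N => ∏ i ∈ Finset.range N, (1 - f i)) atTop (𝓝 L) := by
  have hs' : Summable fun i => ‖-f i‖ := by simpa using hs.norm
  refine ⟨∏' i, (1 + -f i), tprod_one_add_ne_zero_of_summable ?_ hs', ?_⟩
  · simpa [sub_eq_add_neg] using hf
  · simpa [sub_eq_add_neg] using (multipliable_one_add_of_summable hs').tendsto_prod_tprod_nat

lemma jtheta_ne_zero {Q u : ℂ} (hQ0 : Q ≠ 0) (hQ1 : ‖Q‖ < 1) (hu : u ≠ 0)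
    (h : ∀ n : ℤ, u ≠ Q ^ n) : jtheta u Q ≠ 0 := by
  have hg : Summable fun n : ℕ => Q ^ n := summable_geometric_of_norm_lt_one hQ1
  have hg1 : Summable fun n : ℕ => Q ^ (n + 1) := by
    simpa [pow_succ] using hg.mul_right Q
  obtain ⟨E, hE0, hE⟩ := tendsto_prod_aux (one_sub_pow_ne hQ1) hg1
  obtain ⟨A, hA0, hA⟩ := tendsto_prod_aux (f := fun i => Q ^ (i + 1) * u) (by
    intro i hi
    apply h (-((i : ℤ) + 1))
    rw [zpow_neg]
    have : Q ^ ((i : ℤ) + 1) = Q ^ (i + 1) := by exact_mod_cast zpow_natCast Q (i + 1)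
    rw [this]
    exact eq_inv_of_mul_eq_one_right (sub_eq_zero.mp hi).symm) (hg1.mul_right u)
  obtain ⟨B, hB0, hB⟩ := tendsto_prod_aux (f := fun i => Q ^ i * u⁻¹) (by
    intro i hi
    apply h (i : ℤ)
    have := (sub_eq_zero.mp hi)
    field_simp at this
    simpa using this) (hg.mul_right u⁻¹)
  change Tendsto (qp Q) atTop (𝓝 E) at hE
  have hinv := hE.inv₀ hE0
  obtain ⟨M1, hM1⟩ := hE.norm.bddAbove_range
  obtain ⟨M2, hM2⟩ := hinv.norm.bddAbove_range
  have hM1' : ∀ n, ‖qp Q n‖ ≤ M1 := fun n => hM1 ⟨n, rfl⟩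
  have hM2' : ∀ n, ‖(qp Q n)⁻¹‖ ≤ M2 := fun n => hM2 ⟨n, rfl⟩
  have hM20 : 0 ≤ M2 := (norm_nonneg _).trans (hM2' 0)
  have hM10 : 0 ≤ M1 := (norm_nonneg _).trans (hM1' 0)
  have hr : ∀ n, ‖rp Q n‖ ≤ M2 := by
    intro n
    unfold rp
    split_ifs
    · exact hM2' _
    · simpa using hM20
  have hrt : ∀ g : ℕ → ℤ, Tendsto g atTop atTop → Tendsto (fun N => rp Q (g N)) atTop (𝓝 E⁻¹) := by
    intro g hg
    have : Tendsto (fun N => (g N).toNat) atTop atTop := by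
      rw [tendsto_atTop]
      intro b
      filter_upwards [hg.eventually_ge_atTop (b : ℤ)] with N hN
      omega
    refine (hinv.comp this).congr' ?_
    filter_upwards [hg.eventually_ge_atTop 0] with N hN
    simp [rp, hN]
  have hcast : Tendsto (fun N : ℕ => (N : ℤ)) atTop atTop := tendsto_natCast_atTop_atTop
  have lim := tendsto_tsum_of_dominated_convergence (𝓕 := atTop)
    (f := fun (N : ℕ) (k : ℤ) => (-1 : ℂ) ^ k * Q ^ (k * (k + 1) / 2) * u ^ k *
        (qp Q (2 * N) * rp Q (N + k) * rp Q (N - k)))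
    (g := fun k => (-1 : ℂ) ^ k * Q ^ (k * (k + 1) / 2) * u ^ k * (E * E⁻¹ * E⁻¹))
    ((summable_jtheta hQ0 hQ1 hu).norm.mul_right (M1 * M2 * M2)) (by
      intro k
      refine Tendsto.const_mul _ ((Tendsto.mul ?_ ?_).mul ?_)
      · exact hE.comp (tendsto_id.const_mul_atTop' (by norm_num))
      · exact hrt _ (tendsto_atTop_add_const_right _ _ hcast)
      · simpa [sub_eq_add_neg] using hrt _ (tendsto_atTop_add_const_right _ (-k) hcast))
    (by
      refine Eventually.of_forall fun N k => ?_
      rw [norm_mul, norm_mul (qp _ _ * _), norm_mul (qp _ _)]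
      have := hM1' (2 * N)
      have := hr (N + k)
      have := hr (N - k)
      gcongr)
  rw [tsum_mul_right] at lim
  have lim2 := hA.mul hB
  simp_rw [← Finset.prod_mul_distrib] at lim2
  have e : ∀ N : ℕ, (∑' k : ℤ, (-1 : ℂ) ^ k * Q ^ (k * (k + 1) / 2) * u ^ k *
        (qp Q (2 * N) * rp Q (N + k) * rp Q (N - k))) = _ :=
    fun N => (finite_triple hQ0 hQ1 hu N).tsum_eq
  simp_rw [e] at lim
  have := tendsto_nhds_unique lim lim2
  intro h0
  unfold jtheta at h0
  rw [h0, zero_mul] at this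
  exact mul_ne_zero hA0 hB0 this.symm

lemma final_algebra {p Λ x L0 L2 X A1 A3 B1 B3 P1 P3 M1 M3 F1 G1 g f gx FL HL : ℂ}
    (hp : p ≠ 0) (hΛ : Λ ≠ 0) (hx : x ≠ 0) (h0 : L0 ≠ 0) (h2 : L2 ≠ 0) (hX : X ≠ 0)
    (eX : X * X = f * G1 - x⁻¹ * (gx * F1))
    (eP : P1 * P3 = g * (gx - p * x * f))
    (eM : M1 * M3 = g * (gx + p * x * f))
    (eA1 : A1 * A1 = FL * G1 - p * Λ⁻¹ * (HL * F1))
    (eB1 : B1 * B1 = FL * G1 + p * Λ⁻¹ * (HL * F1))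
    (eA3 : A3 * A3 = HL * G1 - p * Λ * (FL * F1))
    (eB3 : B3 * B3 = HL * G1 + p * Λ * (FL * F1))
    (eL : L0 * L2 = g * (FL - Λ⁻¹ * HL)) :
    (1 : ℂ) =
      ((-(Λ / p ^ 3) * A3) * A3 / (2 * (-Λ * L0) * (-(Λ / p ^ 2) * L2)) +
        (-(Λ / p) * A1) * A1 / (2 * L2 * (-Λ * L0))) * (P1 * P3 / (X * (-x * X))) +
      ((Λ / p ^ 3 * B3) * B3 / (2 * (-Λ * L0) * (-(Λ / p ^ 2) * L2)) +
        (Λ / p * B1) * B1 / (2 * L2 * (-Λ * L0))) * (M1 * M3 / (X * (-x * X))) := by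
  have key : -2 * Λ * p * x * (X * X) * (L0 * L2) =
      (Λ * (A1 * A1) - A3 * A3) * (P1 * P3) + (B3 * B3 - Λ * (B1 * B1)) * (M1 * M3) := by
    rw [eX, eP, eM, eA1, eB1, eA3, eB3, eL]
    field_simp
    ring
  have hne : -2 * Λ * p * x * (X * X) * (L0 * L2) ≠ 0 := by
    simp [hp, hΛ, hx, h0, h2, hX]
  have : (1 : ℂ) = ((Λ * (A1 * A1) - A3 * A3) * (P1 * P3) +
      (B3 * B3 - Λ * (B1 * B1)) * (M1 * M3)) / (-2 * Λ * p * x * (X * X) * (L0 * L2)) := by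
    rw [← key, div_self hne]
  rw [this]
  field_simp
  ring

/-- The theta-function identity (with `q = p⁴`, `λ₁ = Λ`) expressing that the
residues of the elliptic function `m_{2,1}` of the 4₁ knot monodromy sum to zero. -/
theorem residues_sum_to_one
    (p : ℂ) (hp0 : 0 < ‖p‖) (hp1 : ‖p‖ < 1)
    (Λ : ℂ) (hΛ0 : Λ ≠ 0) (hΛ : ∀ n : ℤ, Λ ≠ p ^ (2 * n))
    (x : ℂ) (hx0 : x ≠ 0) (hx : ∀ n : ℤ, x ≠ p ^ (4 * n)) :
    (1 : ℂ) =
      (jtheta (p ^ (3 : ℤ) * Λ⁻¹) (p ^ 4) * jtheta (p ^ (-3 : ℤ) * Λ) (p ^ 4) /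
            (2 * jtheta (p ^ (-4 : ℤ) * Λ) (p ^ 4) * jtheta (p ^ (-6 : ℤ) * Λ) (p ^ 4)) +
          jtheta (p ^ (1 : ℤ) * Λ⁻¹) (p ^ 4) * jtheta (p ^ (-1 : ℤ) * Λ) (p ^ 4) /
            (2 * jtheta (p ^ (-2 : ℤ) * Λ) (p ^ 4) * jtheta (p ^ (-4 : ℤ) * Λ) (p ^ 4))) *
        (jtheta (p ^ (-1 : ℤ) * x) (p ^ 4) * jtheta (p ^ (-3 : ℤ) * x) (p ^ 4) /
          (jtheta x (p ^ 4) * jtheta x⁻¹ (p ^ 4))) +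
      (jtheta (-(p ^ (3 : ℤ) * Λ⁻¹)) (p ^ 4) * jtheta (-(p ^ (-3 : ℤ) * Λ)) (p ^ 4) /
            (2 * jtheta (p ^ (-4 : ℤ) * Λ) (p ^ 4) * jtheta (p ^ (-6 : ℤ) * Λ) (p ^ 4)) +
          jtheta (-(p ^ (1 : ℤ) * Λ⁻¹)) (p ^ 4) * jtheta (-(p ^ (-1 : ℤ) * Λ)) (p ^ 4) /
            (2 * jtheta (p ^ (-2 : ℤ) * Λ) (p ^ 4) * jtheta (p ^ (-4 : ℤ) * Λ) (p ^ 4))) *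
        (jtheta (-(p ^ (-1 : ℤ) * x)) (p ^ 4) * jtheta (-(p ^ (-3 : ℤ) * x)) (p ^ 4) /
          (jtheta x (p ^ 4) * jtheta x⁻¹ (p ^ 4))) := by
  have hp : p ≠ 0 := norm_pos_iff.mp hp0
  have hQ0 : p ^ 4 ≠ 0 := pow_ne_zero _ hp
  have hQ1 : ‖p ^ 4‖ < 1 := by
    rw [norm_pow]; exact pow_lt_one₀ (norm_nonneg p) hp1 (by norm_num)
  have z1 : p ^ (-1 : ℤ) = 1 / p := by simp
  have z2 : p ^ (-2 : ℤ) = 1 / p ^ 2 := by rw [zpow_neg, one_div]; norm_cast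
  have z3 : p ^ (-3 : ℤ) = 1 / p ^ 3 := by rw [zpow_neg, one_div]; norm_cast
  have z4 : p ^ (-4 : ℤ) = 1 / p ^ 4 := by rw [zpow_neg, one_div]; norm_cast
  have z6 : p ^ (-6 : ℤ) = 1 / p ^ 6 := by rw [zpow_neg, one_div]; norm_cast
  have y3 : p ^ (3 : ℤ) = p ^ 3 := by norm_cast
  have n1 : Λ / p ≠ 0 := div_ne_zero hΛ0 hp
  have n2 : Λ / p ^ 2 ≠ 0 := div_ne_zero hΛ0 (pow_ne_zero _ hp)
  have n3 : Λ / p ^ 3 ≠ 0 := div_ne_zero hΛ0 (pow_ne_zero _ hp)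
  have m1 : x / p ≠ 0 := div_ne_zero hx0 hp
  have m3 : x / p ^ 3 ≠ 0 := div_ne_zero hx0 (pow_ne_zero _ hp)
  have hpow : ∀ n : ℤ, (p ^ 4) ^ n = p ^ (4 * n) := by
    intro n; rw [zpow_mul]; norm_cast
  rw [z1, z2, z3, z4, z6, y3, zpow_one]
  rw [show p ^ 3 * Λ⁻¹ = (Λ / p ^ 3)⁻¹ by field_simp, show p * Λ⁻¹ = (Λ / p)⁻¹ by field_simp,
    show 1 / p ^ 6 * Λ = (Λ / p ^ 2) / p ^ 4 by field_simp]
  simp only [one_div_mul_eq_div]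
  rw [show -(Λ / p ^ 3)⁻¹ = (-(Λ / p ^ 3))⁻¹ by rw [inv_neg],
    show -(Λ / p)⁻¹ = (-(Λ / p))⁻¹ by rw [inv_neg]]
  rw [jtheta_inv hQ0 n3, jtheta_inv hQ0 n1, jtheta_inv hQ0 (neg_ne_zero.mpr n3),
    jtheta_inv hQ0 (neg_ne_zero.mpr n1), jtheta_inv hQ0 hx0, jtheta_div hQ0 hΛ0,
    jtheta_div hQ0 n2, neg_neg, neg_neg]
  have hg := evF_sq hp
  have eP0 : ∀ y : ℂ, y ≠ 0 → jtheta (y / p) (p ^ 4) * jtheta (y / p ^ 3) (p ^ 4) =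
      evG (p ^ 4) (p ^ 2) * (evG (p ^ 4) (y ^ 2) - p * y * evF (p ^ 4) (y ^ 2)) := by
    intro y hy
    rw [jtheta_mul hQ0 hQ1 (div_ne_zero hy hp) (div_ne_zero hy (pow_ne_zero _ hp)),
      show y / p * (y / p ^ 3) = y ^ 2 / p ^ 4 by field_simp,
      show y / p / (y / p ^ 3) = p ^ 2 by field_simp,
      evF_div hQ0, evG_div hQ0 (pow_ne_zero _ hy), ← hg]
    field_simp
  have eA : ∀ y : ℂ, y ≠ 0 → jtheta (y / p) (p ^ 4) * jtheta (y / p) (p ^ 4) =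
      evF (p ^ 4) (y ^ 2 / p ^ 2) * evG (p ^ 4) 1 -
        p * y⁻¹ * (evG (p ^ 4) (y ^ 2 / p ^ 2) * evF (p ^ 4) 1) := by
    intro y hy
    rw [jtheta_mul hQ0 hQ1 (div_ne_zero hy hp) (div_ne_zero hy hp),
      show y / p * (y / p) = y ^ 2 / p ^ 2 by field_simp, div_self (div_ne_zero hy hp)]
    field_simp
  have eA' : ∀ y : ℂ, y ≠ 0 → jtheta (y / p ^ 3) (p ^ 4) * jtheta (y / p ^ 3) (p ^ 4) =
      evG (p ^ 4) (y ^ 2 / p ^ 2) * evG (p ^ 4) 1 -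
        p * y * (evF (p ^ 4) (y ^ 2 / p ^ 2) * evF (p ^ 4) 1) := by
    intro y hy
    have hd := div_ne_zero hy (pow_ne_zero 3 hp)
    rw [jtheta_mul hQ0 hQ1 hd hd,
      show y / p ^ 3 * (y / p ^ 3) = (y ^ 2 / p ^ 2) / p ^ 4 by field_simp, div_self hd,
      evF_div hQ0, evG_div hQ0 (div_ne_zero (pow_ne_zero _ hy) (pow_ne_zero _ hp))]
    field_simp
  refine final_algebra (F1 := evF (p ^ 4) 1) (G1 := evG (p ^ 4) 1) (g := evG (p ^ 4) (p ^ 2))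
    (f := evF (p ^ 4) (x ^ 2)) (gx := evG (p ^ 4) (x ^ 2)) (FL := evF (p ^ 4) (Λ ^ 2 / p ^ 2))
    (HL := evG (p ^ 4) (Λ ^ 2 / p ^ 2)) hp hΛ0 hx0
    (jtheta_ne_zero hQ0 hQ1 hΛ0 ?_) (jtheta_ne_zero hQ0 hQ1 n2 ?_) (jtheta_ne_zero hQ0 hQ1 hx0 ?_)
    ?_ (eP0 x hx0) ?_ (eA Λ hΛ0) ?_ (eA' Λ hΛ0) ?_ ?_
  · intro n
    rw [hpow, show 4 * n = 2 * (2 * n) by ring]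
    exact hΛ _
  · intro n h
    rw [hpow, div_eq_iff (pow_ne_zero _ hp)] at h
    apply hΛ (2 * n + 1)
    rw [h, show 2 * (2 * n + 1) = 4 * n + 2 by ring, zpow_add₀ hp]
    norm_cast
  · intro n
    rw [hpow]
    exact hx n
  · rw [jtheta_mul hQ0 hQ1 hx0 hx0, div_self hx0, sq]
  · have := eP0 (-x) (neg_ne_zero.mpr hx0)
    rw [neg_div, neg_div, neg_sq] at this
    rw [this]; ring
  · have := eA (-Λ) (neg_ne_zero.mpr hΛ0)
    rw [neg_div, neg_sq, inv_neg] at this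
    rw [this]; ring
  · have := eA' (-Λ) (neg_ne_zero.mpr hΛ0)
    rw [neg_div, neg_sq] at this
    rw [this]; ring
  · rw [jtheta_mul hQ0 hQ1 hΛ0 n2, show Λ * (Λ / p ^ 2) = Λ ^ 2 / p ^ 2 by ring,
      show Λ / (Λ / p ^ 2) = p ^ 2 by field_simp, ← hg]
    field_simp
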